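/- arXiv:1705.07635 — 3 statements merged into one kernel-verified Lean document; each statement's English description precedes it below -/
import Mathlib

section
/- Under Assumption A (index i = 1 is dominant), the left tail of the sum of correlated lognormals satisfies α(γ) := P(Σᵢ₌₁^N exp(Yᵢ) ≤ γ) ∼ P(exp(Y₁) ≤ γ) = Φ((log γ − μ₁)/√Σ₁₁) as γ → 0, i.e. the ratio of the two sides tends to 1. -/
open MeasureTheory Matrix Real Filter

noncomputable def mvnPdf {n : ℕ} (m : Fin n → ℝ) (S : Matrix (Fin n) (Fin n) ℝ)
    (y : Fin n → ℝ) : ℝ :=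
  Real.exp (-(1/2) * ((y - m) ⬝ᵥ S⁻¹.mulVec (y - m))) / Real.sqrt ((2 * Real.pi) ^ n * S.det)

noncomputable def stdNormCDF (x : ℝ) : ℝ :=
  ∫ t in Set.Iic x, Real.exp (-t ^ 2 / 2) / Real.sqrt (2 * Real.pi)

section GaussianTail

open ProbabilityTheory
open scoped MatrixOrder

lemma pi_gaussianReal_eq_withDensity {ι : Type*} [Fintype ι] :
    Measure.pi (fun _ : ι ↦ gaussianReal 0 1) =
      volume.withDensity (fun x ↦ ENNReal.ofReal (∏ i, gaussianPDFReal 0 1 (x i))) := by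
  refine Measure.pi_eq fun s hs ↦ ?_
  have hint : ∀ i, Integrable (gaussianPDFReal 0 1) (volume.restrict (s i)) := fun i ↦
    (integrable_gaussianPDFReal 0 1).integrableOn
  have hnn : ∀ x : ι → ℝ, 0 ≤ ∏ i, gaussianPDFReal 0 1 (x i) := fun x ↦
    Finset.prod_nonneg fun i _ ↦ gaussianPDFReal_nonneg 0 1 (x i)
  rw [withDensity_apply _ (MeasurableSet.univ_pi hs), volume_pi, Measure.restrict_pi_pi,
    ← ofReal_integral_eq_lintegral_ofReal (Integrable.fintype_prod_dep hint) (.of_forall hnn),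
    integral_fintype_prod_eq_prod (f := fun _ ↦ gaussianPDFReal 0 1),
    ENNReal.ofReal_prod_of_nonneg
      fun i _ ↦ integral_nonneg fun x ↦ gaussianPDFReal_nonneg 0 1 x]
  exact Finset.prod_congr rfl fun i _ ↦
    (gaussianReal_apply_eq_integral 0 one_ne_zero (s i)).symm

lemma mvnPdf_nonneg {n : ℕ} (m : Fin n → ℝ) (S : Matrix (Fin n) (Fin n) ℝ) (y : Fin n → ℝ) :
    0 ≤ mvnPdf m S y := by
  unfold mvnPdf
  positivity

lemma continuous_mvnPdf {n : ℕ} (m : Fin n → ℝ) (S : Matrix (Fin n) (Fin n) ℝ) :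
    Continuous (mvnPdf m S) := by
  unfold mvnPdf
  fun_prop

lemma prod_gaussianPDFReal_eq_det_mul_mvnPdf {n : ℕ} (m : Fin n → ℝ)
    (A : Matrix (Fin n) (Fin n) ℝ) (hA : A.det ≠ 0) (x : Fin n → ℝ) :
    ∏ i, gaussianPDFReal 0 1 (x i) = |A.det| * mvnPdf m (A * Aᵀ) (m + A *ᵥ x) := by
  have hu : IsUnit A.det := isUnit_iff_ne_zero.2 hA
  have hquad : (A *ᵥ x) ⬝ᵥ (A * Aᵀ)⁻¹ *ᵥ (A *ᵥ x) = ∑ i, x i ^ 2 := by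
    have h1 : (A * Aᵀ)⁻¹ *ᵥ (A *ᵥ x) = (Aᵀ)⁻¹ *ᵥ x := by
      rw [Matrix.mul_inv_rev, mulVec_mulVec, Matrix.mul_assoc, nonsing_inv_mul _ hu,
        Matrix.mul_one]
    have h2 : (A *ᵥ x) ᵥ* (Aᵀ)⁻¹ = x := by
      rw [← transpose_nonsing_inv, vecMul_transpose, mulVec_mulVec, nonsing_inv_mul _ hu,
        one_mulVec]
    rw [h1, dotProduct_mulVec, h2]
    simp [dotProduct, sq]
  have hdet : √((2 * π) ^ n * (A * Aᵀ).det) = √(2 * π) ^ n * |A.det| := by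
    have hpow : √((2 * π) ^ n) = √(2 * π) ^ n := by
      rw [Real.sqrt_eq_iff_eq_sq (by positivity) (by positivity), pow_right_comm,
        Real.sq_sqrt (by positivity)]
    rw [det_mul, det_transpose, Real.sqrt_mul (by positivity), Real.sqrt_mul_self_eq_abs, hpow]
  simp only [mvnPdf, add_sub_cancel_left, hquad, hdet, gaussianPDFReal_def]
  rw [Finset.prod_mul_distrib, ← Real.exp_sum]
  have hA' : |A.det| ≠ 0 := abs_ne_zero.2 hA
  simp only [NNReal.coe_one, mul_one, Finset.prod_const, Finset.card_univ, Fintype.card_fin,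
    sub_zero, ← Finset.sum_div, Finset.sum_neg_distrib]
  rw [inv_pow, show -(1 / 2) * ∑ i, x i ^ 2 = -(∑ i, x i ^ 2) / 2 by ring]
  field_simp

lemma map_pi_gaussianReal_affine {n : ℕ} (m : Fin n → ℝ)
    (A : Matrix (Fin n) (Fin n) ℝ) (hA : A.det ≠ 0) :
    (Measure.pi (fun _ : Fin n ↦ gaussianReal 0 1)).map (fun x ↦ m + A *ᵥ x) =
      volume.withDensity (fun y ↦ ENNReal.ofReal (mvnPdf m (A * Aᵀ) y)) := by
  have hmeas : Measurable fun x : Fin n → ℝ ↦ m + A *ᵥ x := by fun_prop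
  have hf : Measurable fun y ↦ ENNReal.ofReal (mvnPdf m (A * Aᵀ) y) :=
    (continuous_mvnPdf m _).measurable.ennreal_ofReal
  have hvol : volume.map (fun x : Fin n → ℝ ↦ m + A *ᵥ x) =
      ENNReal.ofReal |A.det⁻¹| • volume := by
    have h : (fun x : Fin n → ℝ ↦ m + A *ᵥ x) = (fun y ↦ m + y) ∘ toLin' A := by
      ext; simp
    rw [h, ← Measure.map_map (by fun_prop) (by fun_prop),
      Real.map_matrix_volume_pi_eq_smul_volume_pi hA, Measure.map_smul, map_add_left_eq_self]
  have hfm : Measurable fun x ↦ ENNReal.ofReal (mvnPdf m (A * Aᵀ) (m + A *ᵥ x)) :=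
    hf.comp hmeas
  ext s hs
  rw [Measure.map_apply hmeas hs, pi_gaussianReal_eq_withDensity,
    withDensity_apply _ (hmeas hs), withDensity_apply _ hs]
  simp_rw [prod_gaussianPDFReal_eq_det_mul_mvnPdf m A hA, ENNReal.ofReal_mul (abs_nonneg _)]
  rw [lintegral_const_mul _ hfm, ← setLIntegral_map hs hf hmeas, hvol,
    Measure.restrict_smul, lintegral_smul_measure, smul_eq_mul, ← mul_assoc,
    ← ENNReal.ofReal_mul (abs_nonneg _), ← abs_mul, mul_inv_cancel₀ hA]
  simp

lemma multivariateGaussian_map_ofLp {n : ℕ} (m : Fin n → ℝ) {S : Matrix (Fin n) (Fin n) ℝ}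
    (hS : S.PosDef) :
    (multivariateGaussian (WithLp.toLp 2 m) S).map WithLp.ofLp =
      volume.withDensity (fun y ↦ ENNReal.ofReal (mvnPdf m S y)) := by
  have hsq : CFC.sqrt S * CFC.sqrt S = S := CFC.sqrt_mul_sqrt_self S hS.posSemidef.nonneg
  have hT : (CFC.sqrt S)ᵀ = CFC.sqrt S := by
    simpa using! (CFC.sqrt_nonneg S).isSelfAdjoint.star_eq
  have hdet : (CFC.sqrt S).det ≠ 0 := by
    intro h
    have := hS.det_pos
    rw [← hsq, det_mul, h] at this
    simp at this
  have key := map_pi_gaussianReal_affine m (CFC.sqrt S) hdet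
  rw [hT, hsq] at key
  rw [← key, multivariateGaussian, ← map_pi_eq_stdGaussian, Measure.map_map (by fun_prop)
    (by fun_prop), Measure.map_map (by fun_prop) (by fun_prop)]
  rfl

lemma setIntegral_mvnPdf {n : ℕ} (m : Fin n → ℝ) {S : Matrix (Fin n) (Fin n) ℝ}
    (hS : S.PosDef) {B : Set (Fin n → ℝ)} (hB : MeasurableSet B) :
    ∫ y in B, mvnPdf m S y =
      (multivariateGaussian (WithLp.toLp 2 m) S).real (WithLp.ofLp ⁻¹' B) := by
  rw [integral_eq_lintegral_of_nonneg_ae (.of_forall (mvnPdf_nonneg m S))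
    (continuous_mvnPdf m S).aestronglyMeasurable, ← withDensity_apply _ hB,
    ← multivariateGaussian_map_ofLp m hS, Measure.map_apply (by fun_prop) hB]
  rfl

lemma stdNormCDF_eq (x : ℝ) : stdNormCDF x = (gaussianReal 0 1).real (Set.Iic x) := by
  rw [measureReal_def, gaussianReal_apply_eq_integral 0 one_ne_zero, ENNReal.toReal_ofReal
    (integral_nonneg fun x ↦ gaussianPDFReal_nonneg 0 1 x), stdNormCDF]
  congr 1 with t
  simp [gaussianPDFReal_def, div_eq_inv_mul]

lemma gaussianReal_real_Ioc_bounds {a b : ℝ} (hab : a ≤ b) (hb : b ≤ 0) :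
    (b - a) * gaussianPDFReal 0 1 a ≤ (gaussianReal 0 1).real (Set.Ioc a b) ∧
      (gaussianReal 0 1).real (Set.Ioc a b) ≤ (b - a) * gaussianPDFReal 0 1 b := by
  have hmono : ∀ x y : ℝ, x ≤ y → y ≤ 0 → gaussianPDFReal 0 1 x ≤ gaussianPDFReal 0 1 y := by
    intro x y hxy hy
    simp only [gaussianPDFReal_def]
    gcongr ?_ * rexp ?_
    simp only [sub_zero, NNReal.coe_one]
    nlinarith
  have hint := (integrable_gaussianPDFReal 0 1).integrableOn (s := Set.Ioc a b)
  have hconst : ∀ c : ℝ, ∫ _ in Set.Ioc a b, c = (b - a) * c := fun c ↦ by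
    simp [hab]
  have hfin : ∀ c : ℝ, IntegrableOn (fun _ ↦ c) (Set.Ioc a b) := fun c ↦
    integrableOn_const (by simp)
  rw [measureReal_def, gaussianReal_apply_eq_integral 0 one_ne_zero, ENNReal.toReal_ofReal
    (integral_nonneg fun x ↦ gaussianPDFReal_nonneg 0 1 x), ← hconst, ← hconst]
  exact ⟨setIntegral_mono_on (hfin _) hint measurableSet_Ioc
      fun x hx ↦ hmono _ _ hx.1.le (hx.2.trans hb),
    setIntegral_mono_on hint (hfin _) measurableSet_Ioc fun x hx ↦ hmono _ _ hx.2 hb⟩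

lemma stdNormCDF_sub_stdNormCDF {a b : ℝ} (hab : a ≤ b) :
    stdNormCDF b - stdNormCDF a = (gaussianReal 0 1).real (Set.Ioc a b) := by
  rw [stdNormCDF_eq, stdNormCDF_eq, ← Set.Iic_sdiff_Iic, measureReal_sdiff
    (Set.Iic_subset_Iic.2 hab) measurableSet_Iic]

lemma stdNormCDF_nonneg (x : ℝ) : 0 ≤ stdNormCDF x := by
  rw [stdNormCDF_eq]
  exact measureReal_nonneg

/-- A crude lower bound of Mills ratio type for the left tail. -/
lemma gaussianPDFReal_le_mul_stdNormCDF {t : ℝ} (ht : t ≤ -1) :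
    gaussianPDFReal 0 1 t ≤ rexp (3 / 2) * -t * stdNormCDF t := by
  have ht0 : t < 0 := by linarith
  have hinv : t⁻¹ < 0 := inv_lt_zero.2 ht0
  have hinv1 : -1 ≤ t⁻¹ := by
    rw [neg_le, ← inv_neg]
    exact inv_le_one_of_one_le₀ (by linarith)
  have h := (gaussianReal_real_Ioc_bounds (a := t + t⁻¹) (b := t) (by linarith) ht0.le).1
  rw [← stdNormCDF_sub_stdNormCDF (by linarith)] at h
  have hpdf : gaussianPDFReal 0 1 t ≤ rexp (3 / 2) * gaussianPDFReal 0 1 (t + t⁻¹) := by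
    simp only [gaussianPDFReal_def, mul_left_comm (rexp (3 / 2)), ← Real.exp_add]
    gcongr
    have : t * t⁻¹ = 1 := mul_inv_cancel₀ ht0.ne
    simp only [sub_zero, NNReal.coe_one]
    nlinarith
  have hle : -t⁻¹ * gaussianPDFReal 0 1 (t + t⁻¹) ≤ stdNormCDF t := by
    linarith [stdNormCDF_nonneg (t + t⁻¹)]
  calc gaussianPDFReal 0 1 t ≤ rexp (3 / 2) * gaussianPDFReal 0 1 (t + t⁻¹) := hpdf
    _ = rexp (3 / 2) * -t * (-t⁻¹ * gaussianPDFReal 0 1 (t + t⁻¹)) := by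
      rw [← mul_assoc, mul_assoc (rexp _), neg_mul_neg, mul_inv_cancel₀ ht0.ne, mul_one]
    _ ≤ _ := by
      gcongr
      have := Real.exp_pos (3 / 2)
      nlinarith

lemma stdNormCDF_pos {t : ℝ} (ht : t ≤ -1) : 0 < stdNormCDF t := by
  have h := (gaussianPDFReal_pos 0 1 t one_ne_zero).trans_le (gaussianPDFReal_le_mul_stdNormCDF ht)
  have : 0 < rexp (3 / 2) * -t := by
    have := Real.exp_pos (3 / 2)
    nlinarith
  exact pos_of_mul_pos_right h this.le

/-- Shifting the argument by `o(1 / |u|)` does not change the left Gaussian tail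
asymptotically. -/
lemma tendsto_stdNormCDF_sub_div {α : Type*} {l : Filter α} {u δ : α → ℝ}
    (hu : Tendsto u l atBot) (hδ : ∀ᶠ x in l, 0 ≤ δ x)
    (huδ : Tendsto (fun x ↦ u x * δ x) l (nhds 0)) :
    Tendsto (fun x ↦ stdNormCDF (u x - δ x) / stdNormCDF (u x)) l (nhds 1) := by
  have hlow : Tendsto (fun x ↦ 1 + rexp (3 / 2) * (u x * δ x)) l (nhds 1) := by
    simpa using (huδ.const_mul (rexp (3 / 2))).const_add 1
  refine tendsto_of_tendsto_of_tendsto_of_le_of_le' hlow tendsto_const_nhds ?_ ?_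
  · filter_upwards [hu.eventually_le_atBot (-1), hδ] with x hx hδx
    have hpos := stdNormCDF_pos hx
    have h := (gaussianReal_real_Ioc_bounds (a := u x - δ x) (b := u x)
      (by linarith) (by linarith)).2
    rw [← stdNormCDF_sub_stdNormCDF (by linarith)] at h
    have h2 := mul_le_mul_of_nonneg_left (gaussianPDFReal_le_mul_stdNormCDF hx) hδx
    rw [le_div_iff₀ hpos]
    linarith
  · filter_upwards [hu.eventually_le_atBot (-1), hδ] with x hx hδx
    have hpos := stdNormCDF_pos hx
    rw [div_le_one hpos]
    linarith [stdNormCDF_sub_stdNormCDF (a := u x - δ x) (b := u x) (by linarith),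
      measureReal_nonneg (μ := gaussianReal 0 1) (s := Set.Ioc (u x - δ x) (u x))]


section MultivariateGaussian

variable {n : ℕ} {m : EuclideanSpace ℝ (Fin (n + 1))} {S : Matrix (Fin (n + 1)) (Fin (n + 1)) ℝ}

lemma multivariateGaussian_real_coord_zero_le (hS : S.PosDef) (a : ℝ) :
    (multivariateGaussian m S).real {ω | ω 0 ≤ a} = stdNormCDF ((a - m 0) / √(S 0 0)) := by
  have hpos : 0 < S 0 0 := hS.diag_pos
  have hmap := (measurePreserving_eval_multivariateGaussian (μ := m) hS.posSemidef (i := 0)).map_eq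
  have hstd : (gaussianReal (m 0) (S 0 0).toNNReal).map (fun x ↦ (x - m 0) / √(S 0 0)) =
      gaussianReal 0 1 := by
    have hcomp : (fun x ↦ (x - m 0) / √(S 0 0)) = (· / √(S 0 0)) ∘ (· - m 0) := rfl
    rw [hcomp, ← Measure.map_map (by fun_prop) (by fun_prop), gaussianReal_map_sub_const,
      gaussianReal_map_div_const]
    congr 1
    · simp
    · ext
      simp [Real.sq_sqrt hpos.le, hpos.le, hpos.ne']
  rw [stdNormCDF_eq, ← hstd, ← hmap, map_measureReal_apply (by fun_prop) measurableSet_Iic,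
    map_measureReal_apply (by fun_prop) (measurableSet_Iic.preimage (by fun_prop))]
  congr 1 with ω
  simp [div_le_div_iff_of_pos_right (Real.sqrt_pos.2 hpos)]

/-- The residuals of the regression of the other coordinates on the first one are independent
of the first coordinate. -/
lemma indepFun_coord_zero_residual (hS : S.PosDef) :
    IndepFun (fun ω : EuclideanSpace ℝ (Fin (n + 1)) ↦ ω 0)
      (fun ω (j : Fin n) ↦ ω j.succ - S 0 j.succ / S 0 0 * ω 0) (multivariateGaussian m S) := by
  have hpos : 0 < S 0 0 := hS.diag_pos
  have hlaw : HasGaussianLaw (fun ω : EuclideanSpace ℝ (Fin (n + 1)) ↦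
      ((fun _ ↦ ω 0 : Unit → ℝ), (fun j ↦ ω j.succ - S 0 j.succ / S 0 0 * ω 0 : Fin n → ℝ)))
      (multivariateGaussian m S) := by
    let p (i : Fin (n + 1)) : EuclideanSpace ℝ (Fin (n + 1)) →L[ℝ] ℝ := EuclideanSpace.proj i
    exact IsGaussian.hasGaussianLaw_id.map_fun
      ((ContinuousLinearMap.pi fun _ : Unit ↦ p 0).prod
        (ContinuousLinearMap.pi fun j : Fin n ↦ p j.succ - (S 0 j.succ / S 0 0) • p 0))
  have hL : ∀ i, MemLp (fun ω : EuclideanSpace ℝ (Fin (n + 1)) ↦ ω i) 2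
      (multivariateGaussian m S) := fun i ↦
    (IsGaussian.hasGaussianLaw_id.map_fun
      (EuclideanSpace.proj i : EuclideanSpace ℝ (Fin (n + 1)) →L[ℝ] ℝ)).memLp_two
  have hind := hlaw.indepFun_of_covariance_eval fun i j ↦ by
    rw [covariance_fun_sub_right (hL 0) (hL _) ((hL 0).const_mul _),
      covariance_const_mul_right, covariance_eval_multivariateGaussian hS.posSemidef,
      covariance_eval_multivariateGaussian hS.posSemidef]
    field_simp
    simp
  exact hind.comp (φ := fun f : Unit → ℝ ↦ f ()) (by fun_prop) measurable_id

end MultivariateGaussian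

lemma sum_exp_le_exp {n : ℕ} {ω : Fin (n + 1) → ℝ} {β : Fin n → ℝ} {κ L : ℝ}
    (hβ : ∀ j, 1 + 2 * κ ≤ β j) (hκ : 0 < κ) (hL : L ≤ 0)
    (h0 : ω 0 ≤ L - rexp (κ * L))
    (hT : ∑ j : Fin n, rexp (ω j.succ - β j * ω 0) ≤ rexp (-(κ * L))) :
    ∑ i, rexp (ω i) ≤ rexp L := by
  have hX : ω 0 ≤ L := by linarith [Real.exp_pos (κ * L)]
  have hrest : ∑ j : Fin n, rexp (ω j.succ) ≤ rexp (ω 0) * rexp (κ * L) := by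
    calc ∑ j : Fin n, rexp (ω j.succ)
        ≤ ∑ j : Fin n, rexp (ω j.succ - β j * ω 0) * rexp (ω 0 + 2 * κ * L) := by
          gcongr with j
          rw [← Real.exp_add]
          gcongr
          nlinarith [hβ j]
      _ = (∑ j : Fin n, rexp (ω j.succ - β j * ω 0)) * rexp (ω 0 + 2 * κ * L) := by
          rw [Finset.sum_mul]
      _ ≤ rexp (-(κ * L)) * rexp (ω 0 + 2 * κ * L) := by gcongr
      _ = rexp (ω 0) * rexp (κ * L) := by
          rw [← Real.exp_add, ← Real.exp_add]
          ring_nf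
  calc ∑ i, rexp (ω i) = rexp (ω 0) + ∑ j : Fin n, rexp (ω j.succ) := Fin.sum_univ_succ _
    _ ≤ rexp (ω 0) * (rexp (κ * L) + 1) := by linarith
    _ ≤ rexp (ω 0) * rexp (rexp (κ * L)) := by gcongr; exact Real.add_one_le_exp _
    _ ≤ rexp L := by
      rw [← Real.exp_add]
      gcongr
      linarith

lemma stdNormCDF_mul_le_real_sum_exp_le {n : ℕ} {m : EuclideanSpace ℝ (Fin (n + 1))}
    {S : Matrix (Fin (n + 1)) (Fin (n + 1)) ℝ} (hS : S.PosDef) {κ L : ℝ}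
    (hβ : ∀ j : Fin n, 1 + 2 * κ ≤ S 0 j.succ / S 0 0) (hκ : 0 < κ) (hL : L ≤ 0) :
    stdNormCDF ((L - rexp (κ * L) - m 0) / √(S 0 0)) *
        cdf ((multivariateGaussian m S).map
          fun ω ↦ ∑ j : Fin n, rexp (ω j.succ - S 0 j.succ / S 0 0 * ω 0)) (rexp (-(κ * L))) ≤
      (multivariateGaussian m S).real {ω | ∑ i, rexp (ω i) ≤ rexp L} := by
  have hmeas : Measurable fun ω : EuclideanSpace ℝ (Fin (n + 1)) ↦
      ∑ j : Fin n, rexp (ω j.succ - S 0 j.succ / S 0 0 * ω 0) := by fun_prop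
  have := Measure.isProbabilityMeasure_map (μ := multivariateGaussian m S) hmeas.aemeasurable
  have hind := (indepFun_coord_zero_residual (m := m) hS).comp (φ := id)
    (ψ := fun z : Fin n → ℝ ↦ ∑ j, rexp (z j)) measurable_id (by fun_prop)
  rw [cdf_eq_real, map_measureReal_apply hmeas measurableSet_Iic,
    ← multivariateGaussian_real_coord_zero_le hS]
  have h := hind.measure_inter_preimage_eq_mul (Set.Iic (L - rexp (κ * L)))
    (Set.Iic (rexp (-(κ * L)))) measurableSet_Iic measurableSet_Iic
  have h' := congrArg ENNReal.toReal h
  rw [ENNReal.toReal_mul] at h'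
  refine h'.symm.trans_le (measureReal_mono fun ω hω ↦ ?_)
  exact sum_exp_le_exp hβ hκ hL hω.1 hω.2

end GaussianTail

theorem stmt9 {n : ℕ} (m : Fin (n + 1) → ℝ) (S : Matrix (Fin (n + 1)) (Fin (n + 1)) ℝ)
    (hS : S.PosDef)
    (hA : ∀ j : Fin (n + 1), j ≠ 0 →
      Real.sqrt (S 0 0) < S 0 j / Real.sqrt (S 0 0 * S j j) * Real.sqrt (S j j)) :
    (∀ γ : ℝ, 0 < γ →
      (∫ y in {y : Fin (n + 1) → ℝ | Real.exp (y 0) ≤ γ}, mvnPdf m S y) =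
        stdNormCDF ((Real.log γ - m 0) / Real.sqrt (S 0 0))) ∧
    Filter.Tendsto
      (fun γ : ℝ =>
        (∫ y in {y : Fin (n + 1) → ℝ | ∑ i, Real.exp (y i) ≤ γ}, mvnPdf m S y) /
          stdNormCDF ((Real.log γ - m 0) / Real.sqrt (S 0 0)))
      (nhdsWithin 0 (Set.Ioi 0)) (nhds 1) := by
  have hpos : ∀ i, 0 < S i i := fun i ↦ hS.diag_pos
  have hσ : 0 < √(S 0 0) := Real.sqrt_pos.2 (hpos 0)
  have hfirst : ∀ γ : ℝ, 0 < γ →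
      (∫ y in {y : Fin (n + 1) → ℝ | Real.exp (y 0) ≤ γ}, mvnPdf m S y) =
        stdNormCDF ((Real.log γ - m 0) / Real.sqrt (S 0 0)) := fun γ hγ ↦ by
    rw [setIntegral_mvnPdf m hS (measurableSet_le (by fun_prop) (by fun_prop)),
      ← multivariateGaussian_real_coord_zero_le (m := WithLp.toLp 2 m) hS]
    simp [Real.le_log_iff_exp_le hγ]
  refine ⟨hfirst, ?_⟩
  obtain ⟨κ, hκ, hβ⟩ : ∃ κ > 0, ∀ j : Fin n, 1 + 2 * κ ≤ S 0 j.succ / S 0 0 := by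
    have hlt : ∀ j : Fin n, 0 < (S 0 j.succ / S 0 0 - 1) / 2 := fun j ↦ by
      have h := hA j.succ (Fin.succ_ne_zero j)
      have hσj : 0 < √(S j.succ j.succ) := Real.sqrt_pos.2 (hpos _)
      rw [Real.sqrt_mul (hpos 0).le, div_mul_eq_mul_div, mul_div_mul_right _ _ hσj.ne',
        lt_div_iff₀ hσ, Real.mul_self_sqrt (hpos 0).le] at h
      have := (one_lt_div (hpos 0)).2 h
      linarith
    have hev : ∀ᶠ κ in nhdsWithin (0 : ℝ) (Set.Ioi 0),
        ∀ j : Fin n, κ < (S 0 j.succ / S 0 0 - 1) / 2 :=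
      eventually_all.2 fun j ↦ nhdsWithin_le_nhds (eventually_lt_nhds (hlt j))
    obtain ⟨κ, h, hκ⟩ := (hev.and self_mem_nhdsWithin).exists
    exact ⟨κ, hκ, fun j ↦ by linarith [h j]⟩
  have hlog : Tendsto Real.log (nhdsWithin 0 (Set.Ioi 0)) atBot := Real.tendsto_log_nhdsGT_zero
  have hexp : Tendsto (fun L : ℝ ↦ rexp (κ * L)) atBot (nhds 0) :=
    Real.tendsto_exp_atBot.comp (tendsto_id.const_mul_atBot hκ)
  have hmul : Tendsto (fun L : ℝ ↦ L * rexp (κ * L)) atBot (nhds 0) := by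
    have h := ((Real.tendsto_pow_mul_exp_neg_atTop_nhds_zero 1).comp
      (tendsto_neg_atBot_atTop.comp (tendsto_id.const_mul_atBot hκ))).const_mul (-κ⁻¹)
    rw [mul_zero] at h
    refine h.congr fun L ↦ ?_
    simp
    field_simp
  have hcdf := (ProbabilityTheory.tendsto_cdf_atTop
    ((ProbabilityTheory.multivariateGaussian (WithLp.toLp 2 m) S).map
      fun ω ↦ ∑ j : Fin n, rexp (ω j.succ - S 0 j.succ / S 0 0 * ω 0))).comp
    (Real.tendsto_exp_atTop.comp
      (tendsto_neg_atBot_atTop.comp (tendsto_id.const_mul_atBot hκ)))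
  have hu : Tendsto (fun L : ℝ ↦ (L - m 0) / √(S 0 0)) atBot atBot :=
    (tendsto_atBot_add_const_right _ (-m 0) tendsto_id).atBot_div_const hσ
  have hshift := tendsto_stdNormCDF_sub_div (δ := fun L : ℝ ↦ rexp (κ * L) / √(S 0 0)) hu
    (.of_forall fun L ↦ by positivity) (by
      have := (hmul.sub (hexp.const_mul (m 0))).div_const (√(S 0 0) * √(S 0 0))
      simp only [mul_zero, sub_zero, zero_div] at this
      refine this.congr fun L ↦ ?_
      field_simp)
  have hlower := (hshift.mul hcdf).comp hlog
  rw [mul_one] at hlower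
  refine tendsto_of_tendsto_of_tendsto_of_le_of_le' hlower tendsto_const_nhds ?_ ?_
  · filter_upwards [hlog.eventually_le_atBot 0, self_mem_nhdsWithin] with γ hL hγ
    have h := stdNormCDF_mul_le_real_sum_exp_le (m := WithLp.toLp 2 m) hS hβ hκ hL
    rw [Real.exp_log hγ] at h
    rw [setIntegral_mvnPdf m hS (measurableSet_le (by fun_prop) (by fun_prop))]
    simp only [Function.comp_apply, id_eq]
    rw [div_mul_eq_mul_div, ← sub_div, sub_right_comm]
    exact div_le_div_of_nonneg_right h (stdNormCDF_nonneg _)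
  · filter_upwards [self_mem_nhdsWithin] with γ hγ
    refine div_le_one_of_le₀ ?_ (stdNormCDF_nonneg _)
    rw [← hfirst γ hγ, setIntegral_mvnPdf m hS (measurableSet_le (by fun_prop) (by fun_prop)),
      setIntegral_mvnPdf m hS (measurableSet_le (by fun_prop) (by fun_prop))]
    refine measureReal_mono fun ω hω ↦ ?_
    exact (Finset.single_le_sum (f := fun i ↦ rexp (ω i)) (fun i _ ↦ (Real.exp_pos _).le)
      (Finset.mem_univ 0)).trans hω
end

section
/- Lemma 2: Under Assumption A, with aᵢ = Σᵢ₁/Σ₁₁ − 1 > 0, cᵢ = exp(μᵢ − (Σᵢ₁/Σ₁₁)μ₁), and i₀ the index maximizing cᵢ γ^{aᵢ} for small γ, there exists a constant C₂ such that for all sufficiently small γ > 0, P₁ − P₂ ≤ C₂ γ^{a_{i₀}}, where P₁ = P_g(exp(Y₁) ≤ γ) and P₂ = P_g(Σᵢ exp(Yᵢ) ≤ γ) under the mean-shifted measure g. -/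
open MeasureTheory Matrix Real Filter

/-- A positive definite real quadratic form dominates a multiple of the sum of squares. -/
lemma Matrix.PosDef.exists_mul_sum_sq_le {n : ℕ} {A : Matrix (Fin n) (Fin n) ℝ} (hA : A.PosDef) :
    ∃ δ > 0, ∀ z : Fin n → ℝ, δ * ∑ i, z i ^ 2 ≤ z ⬝ᵥ A.mulVec z := by
  have hcont : Continuous fun z : EuclideanSpace ℝ (Fin n) => z.ofLp ⬝ᵥ A.mulVec z.ofLp := by
    fun_prop
  have hpos : ∀ z ∈ Metric.sphere (0 : EuclideanSpace ℝ (Fin n)) 1,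
      0 < z.ofLp ⬝ᵥ A.mulVec z.ofLp := by
    intro z hz
    have hne : z.ofLp ≠ 0 := by
      intro h
      have : z = 0 := by ext i; simp [h]
      simp [this] at hz
    simpa using hA.dotProduct_mulVec_pos hne
  obtain ⟨δ, hδ, hle⟩ := (isCompact_sphere (0 : EuclideanSpace ℝ (Fin n)) 1).exists_forall_le'
    hcont.continuousOn hpos
  refine ⟨δ, hδ, fun z => ?_⟩
  by_cases hz : z = 0
  · simp [hz]
  set r : ℝ := ‖WithLp.toLp 2 z‖ with hr
  have hr0 : 0 < r := by
    rw [hr, norm_pos_iff]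
    simpa using hz
  have hsum : r ^ 2 = ∑ i, z i ^ 2 := by
    rw [hr, EuclideanSpace.norm_sq_eq]
    simp
  have h := hle (WithLp.toLp 2 (r⁻¹ • z)) (by
    rw [mem_sphere_zero_iff_norm, WithLp.toLp_smul, norm_smul, ← hr, norm_inv, Real.norm_eq_abs,
      abs_of_pos hr0, inv_mul_cancel₀ hr0.ne'])
  simp only [Matrix.mulVec_smul, dotProduct_smul, smul_dotProduct, smul_eq_mul] at h
  rw [← hsum]
  have := mul_le_mul_of_nonneg_right h (sq_nonneg r)
  calc δ * r ^ 2 ≤ _ := this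
    _ = _ := by field_simp

lemma integrable_exp_mul_sub_mul_sq {b : ℝ} (hb : 0 < b) (c : ℝ) :
    Integrable fun x : ℝ => Real.exp (c * x - b * x ^ 2) := by
  refine (integrable_cexp_quadratic (b := (b : ℂ)) (by simpa using hb) c 0).norm.congr
    (ae_of_all _ fun x => ?_)
  simp only [Complex.norm_exp]
  congr 1
  simp [← Complex.ofReal_pow]
  ring

lemma integrable_exp_neg_mul_sum_sq {n : ℕ} {b : ℝ} (hb : 0 < b) :
    Integrable fun z : Fin n → ℝ => Real.exp (-b * ∑ i, z i ^ 2) := by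
  have := Integrable.fintype_prod (μ := fun _ : Fin n => (volume : Measure ℝ))
    (f := fun _ x => Real.exp (-b * x ^ 2)) fun _ => integrable_exp_neg_mul_sq hb
  simp only [Finset.mul_sum, Real.exp_sum]
  exact this

lemma integrable_sum_exp_mul_exp_neg_mul_sum_sq {n : ℕ} {b : ℝ} (hb : 0 < b) :
    Integrable fun z : Fin n → ℝ =>
      (∑ j, Real.exp (z j)) * Real.exp (-b * ∑ i, z i ^ 2) := by
  simp only [Finset.sum_mul]
  refine integrable_finsetSum _ fun j _ => ?_
  have := Integrable.fintype_prod (μ := fun _ : Fin n => (volume : Measure ℝ))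
    (f := fun i x => Real.exp ((if i = j then 1 else 0) * x - b * x ^ 2))
    fun i => integrable_exp_mul_sub_mul_sq hb _
  refine this.congr (ae_of_all _ fun z => ?_)
  simp only [← Real.exp_sum, ← Real.exp_add]
  congr 1
  simp [Finset.sum_sub_distrib, Finset.mul_sum]
  ring

lemma neg_lt_or_half_lt_of_one_sub_exp_lt {x t : ℝ} (hx : x ≤ 0) (h : 1 - Real.exp x < t) :
    -(2 * t) < x ∨ 1 < 2 * t := by
  by_contra! hcon
  obtain ⟨h1, h2⟩ := hcon
  have ht : 0 < t := lt_of_le_of_lt (by simpa using hx) h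
  have h3 : Real.exp x * (1 + 2 * t) ≤ 1 := by
    calc Real.exp x * (1 + 2 * t) ≤ Real.exp (-(2 * t)) * Real.exp (2 * t) := by
          gcongr
          linarith [Real.add_one_le_exp (2 * t)]
      _ = 1 := by rw [← Real.exp_add]; simp
  nlinarith

lemma setLIntegral_one_sub_exp_lt_le {b : ℝ} (hb : 0 < b) {t : ℝ} (ht : 0 ≤ t) :
    ∫⁻ x in {x : ℝ | x ≤ 0 ∧ 1 - Real.exp x < t}, ENNReal.ofReal (Real.exp (-b * x ^ 2)) ≤
      ENNReal.ofReal (t * (2 + 2 * ∫ x : ℝ, Real.exp (-b * x ^ 2))) := by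
  have hI : 0 ≤ ∫ x : ℝ, Real.exp (-b * x ^ 2) := integral_nonneg fun _ => (Real.exp_pos _).le
  by_cases h2 : 1 < 2 * t
  · calc _ ≤ ∫⁻ x : ℝ, ENNReal.ofReal (Real.exp (-b * x ^ 2)) := setLIntegral_le_lintegral _ _
      _ = ENNReal.ofReal (∫ x : ℝ, Real.exp (-b * x ^ 2)) :=
        (ofReal_integral_eq_lintegral_ofReal (integrable_exp_neg_mul_sq hb)
          (ae_of_all _ fun _ => (Real.exp_pos _).le)).symm
      _ ≤ _ := ENNReal.ofReal_le_ofReal (by nlinarith)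
  · calc _ ≤ ∫⁻ x in Set.Ioc (-(2 * t)) 0, ENNReal.ofReal (Real.exp (-b * x ^ 2)) :=
          lintegral_mono_set fun x hx =>
            ⟨(neg_lt_or_half_lt_of_one_sub_exp_lt hx.1 hx.2).resolve_right h2, hx.1⟩
      _ ≤ ∫⁻ _ in Set.Ioc (-(2 * t)) 0, 1 := by
        refine lintegral_mono fun x => ?_
        simp only [ENNReal.ofReal_le_one, Real.exp_le_one_iff]
        nlinarith [sq_nonneg x]
      _ = ENNReal.ofReal (2 * t) := by simp
      _ ≤ _ := ENNReal.ofReal_le_ofReal (by nlinarith)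

lemma measurableSet_one_sub_exp_lt {α : Type*} [MeasurableSpace α] {f h : α → ℝ}
    (hf : Measurable f) (hh : Measurable h) :
    MeasurableSet {x | f x ≤ 0 ∧ 1 - Real.exp (f x) < h x} := by
  rw [Set.ofPred_and]
  exact (measurableSet_le hf measurable_const).inter (measurableSet_lt (by fun_prop) hh)

/-- The Gaussian weight of the layer `1 - ε ∑ exp (z j) < exp (z 0) ≤ 1` is `O(ε)`. -/
lemma exists_setLIntegral_layer_le (n : ℕ) {b : ℝ} (hb : 0 < b) :
    ∃ C : ℝ, 0 ≤ C ∧ ∀ ε : ℝ, 0 ≤ ε →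
      ∫⁻ z in {z : Fin (n + 1) → ℝ |
          z 0 ≤ 0 ∧ 1 - Real.exp (z 0) < ε * ∑ j : Fin n, Real.exp (z j.succ)},
        ENNReal.ofReal (Real.exp (-b * ∑ i, z i ^ 2)) ≤ ENNReal.ofReal (C * ε) := by
  set I : ℝ := 2 + 2 * ∫ x : ℝ, Real.exp (-b * x ^ 2)
  have hI : 0 ≤ I := by
    have : 0 ≤ ∫ x : ℝ, Real.exp (-b * x ^ 2) := integral_nonneg fun _ => (Real.exp_pos _).le
    positivity
  set W : (Fin n → ℝ) → ℝ := fun w => ∑ j, Real.exp (w j)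
  set G : (Fin n → ℝ) → ℝ := fun w => Real.exp (-b * ∑ i, w i ^ 2)
  have hW : ∀ w, 0 ≤ W w := fun w => Finset.sum_nonneg fun _ _ => (Real.exp_pos _).le
  have hG : ∀ w, 0 ≤ G w := fun w => (Real.exp_pos _).le
  have hWm : Measurable W := by fun_prop
  have hGm : Measurable G := by fun_prop
  have hWG : 0 ≤ ∫ w, W w * G w := integral_nonneg fun w => mul_nonneg (hW w) (hG w)
  refine ⟨I * ∫ w, W w * G w, mul_nonneg hI hWG, fun ε hε => ?_⟩
  set D : Set (ℝ × (Fin n → ℝ)) := {p | p.1 ≤ 0 ∧ 1 - Real.exp p.1 < ε * W p.2}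
  have hD : MeasurableSet D := measurableSet_one_sub_exp_lt (by fun_prop) (by fun_prop)
  set F : ℝ × (Fin n → ℝ) → ENNReal :=
    D.indicator fun p => ENNReal.ofReal (Real.exp (-b * p.1 ^ 2)) * ENNReal.ofReal (G p.2)
  have hF : Measurable F := Measurable.indicator (by fun_prop) hD
  have hsplit := (volume_preserving_piFinSuccAbove (fun _ : Fin (n + 1) => ℝ) 0).lintegral_comp hF
  rw [← lintegral_indicator (measurableSet_one_sub_exp_lt (by fun_prop) (by fun_prop))]
  calc _ = ∫⁻ z, F (MeasurableEquiv.piFinSuccAbove (fun _ : Fin (n + 1) => ℝ) 0 z) := by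
        refine lintegral_congr fun z => ?_
        simp only [F, Set.indicator_apply]
        refine if_congr ?_ ?_ rfl
        · rfl
        · rw [← ENNReal.ofReal_mul (Real.exp_pos _).le, ← Real.exp_add, ← mul_add,
            Fin.sum_univ_succ]
          rfl
    _ = ∫⁻ w, ∫⁻ x, F (x, w) := by
        rw [hsplit, Measure.volume_eq_prod, lintegral_prod_symm' _ hF]
    _ ≤ ∫⁻ w, ENNReal.ofReal (I * ε) * ENNReal.ofReal (W w * G w) := by
        refine lintegral_mono fun w => ?_
        have hDw : MeasurableSet {x : ℝ | x ≤ 0 ∧ 1 - Real.exp x < ε * W w} :=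
          measurableSet_one_sub_exp_lt measurable_id measurable_const
        calc ∫⁻ x, F (x, w)
            = ∫⁻ x in {x : ℝ | x ≤ 0 ∧ 1 - Real.exp x < ε * W w},
                ENNReal.ofReal (Real.exp (-b * x ^ 2)) * ENNReal.ofReal (G w) := by
              rw [← lintegral_indicator hDw]
              rfl
          _ = (∫⁻ x in {x : ℝ | x ≤ 0 ∧ 1 - Real.exp x < ε * W w},
                ENNReal.ofReal (Real.exp (-b * x ^ 2))) * ENNReal.ofReal (G w) :=
              lintegral_mul_const _ (by fun_prop)
          _ ≤ ENNReal.ofReal (ε * W w * I) * ENNReal.ofReal (G w) := by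
              gcongr
              exact setLIntegral_one_sub_exp_lt_le hb (mul_nonneg hε (hW w))
          _ = _ := by
              rw [← ENNReal.ofReal_mul' (hG w), ← ENNReal.ofReal_mul (mul_nonneg hI hε)]
              congr 1
              ring
    _ = ENNReal.ofReal (I * ε) * ENNReal.ofReal (∫ w, W w * G w) := by
        rw [lintegral_const_mul _ (by fun_prop), ofReal_integral_eq_lintegral_ofReal
          (integrable_sum_exp_mul_exp_neg_mul_sum_sq hb)
          (ae_of_all _ fun w => mul_nonneg (hW w) (hG w))]
    _ = _ := by
        rw [← ENNReal.ofReal_mul (mul_nonneg hI hε)]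
        congr 1
        ring

theorem stmt13 {n : ℕ} (m : Fin (n + 1) → ℝ) (S : Matrix (Fin (n + 1)) (Fin (n + 1)) ℝ)
    (hS : S.PosDef)
    (hA : ∀ j : Fin (n + 1), j ≠ 0 →
      Real.sqrt (S 0 0) < S 0 j / Real.sqrt (S 0 0 * S j j) * Real.sqrt (S j j))
    (a c : Fin (n + 1) → ℝ)
    (ha : ∀ i, a i = S i 0 / S 0 0 - 1)
    (hc : ∀ i, c i = Real.exp (m i - S i 0 / S 0 0 * m 0))
    (i₀ : Fin (n + 1)) (hi₀ : i₀ ≠ 0)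
    (hmax : ∀ᶠ γ in nhdsWithin (0 : ℝ) (Set.Ioi 0),
      ∀ i : Fin (n + 1), i ≠ 0 → c i * γ ^ (a i) ≤ c i₀ * γ ^ (a i₀)) :
    let Λ : ℝ → Fin (n + 1) → ℝ := fun γ k =>
      if k = 0 then Real.log γ - m 0 else S k 0 / S 0 0 * (Real.log γ - m 0)
    let g : ℝ → (Fin (n + 1) → ℝ) → ℝ := fun γ y => mvnPdf (m + Λ γ) S y
    let P1 : ℝ → ℝ := fun γ => ∫ y in {y : Fin (n + 1) → ℝ | Real.exp (y 0) ≤ γ}, g γ y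
    let P2 : ℝ → ℝ := fun γ =>
      ∫ y in {y : Fin (n + 1) → ℝ | ∑ i, Real.exp (y i) ≤ γ}, g γ y
    ∃ C₂ : ℝ, ∀ᶠ γ in nhdsWithin (0 : ℝ) (Set.Ioi 0),
      P1 γ - P2 γ ≤ C₂ * γ ^ (a i₀) := by
  intro Λ g P1 P2
  obtain ⟨δ, hδ, hquad⟩ := hS.inv.exists_mul_sum_sq_le
  have hb : 0 < δ / 2 := by positivity
  obtain ⟨C, hC, hlayer⟩ := exists_setLIntegral_layer_le n hb
  set K : ℝ := (Real.sqrt ((2 * Real.pi) ^ (n + 1) * S.det))⁻¹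
  have hK : 0 ≤ K := by positivity
  have hg_nonneg : ∀ γ y, 0 ≤ g γ y := fun γ y => by
    simp only [g, mvnPdf]
    positivity
  have hg_le : ∀ γ y, g γ y ≤
      K * Real.exp (-(δ / 2) * ∑ i, (y - (m + Λ γ)) i ^ 2) := fun γ y => by
    simp only [g, mvnPdf]
    rw [div_eq_mul_inv, mul_comm]
    refine mul_le_mul_of_nonneg_left (Real.exp_le_exp.mpr ?_) hK
    linarith [hquad (y - (m + Λ γ))]
  have hg_cont : ∀ γ, Continuous (g γ) := fun γ => by
    simp only [g, mvnPdf]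
    fun_prop
  have hg_int : ∀ γ, Integrable (g γ) := fun γ => by
    refine Integrable.mono' (((integrable_exp_neg_mul_sum_sq hb).comp_sub_right
      (m + Λ γ)).const_mul K) (hg_cont γ).aestronglyMeasurable (ae_of_all _ fun y => ?_)
    rw [Real.norm_of_nonneg (hg_nonneg γ y)]
    exact hg_le γ y
  refine ⟨K * C * c i₀, ?_⟩
  filter_upwards [hmax, self_mem_nhdsWithin] with γ hγmax hγ
  have hγ : 0 < γ := hγ
  set ε : ℝ := c i₀ * γ ^ a i₀
  have hε : 0 ≤ ε := by
    have : 0 < c i₀ := by rw [hc]; exact Real.exp_pos _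
    positivity
  set A : Set (Fin (n + 1) → ℝ) := {y | Real.exp (y 0) ≤ γ}
  set B : Set (Fin (n + 1) → ℝ) := {y | ∑ i, Real.exp (y i) ≤ γ}
  set D : Set (Fin (n + 1) → ℝ) :=
    {z | z 0 ≤ 0 ∧ 1 - Real.exp (z 0) < ε * ∑ j : Fin n, Real.exp (z j.succ)}
  have hAm : MeasurableSet A := measurableSet_le (by fun_prop) (by fun_prop)
  have hBm : MeasurableSet B := measurableSet_le (by fun_prop) (by fun_prop)
  have hDm : MeasurableSet D := measurableSet_one_sub_exp_lt (by fun_prop) (by fun_prop)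
  have hBA : B ⊆ A := fun y hy => (Finset.single_le_sum (f := fun i => Real.exp (y i))
    (fun i _ => (Real.exp_pos _).le) (Finset.mem_univ 0)).trans hy
  have hshift : ∀ y ∈ A \ B, y - (m + Λ γ) ∈ D := by
    rintro y ⟨hyA, hyB⟩
    have hyA : Real.exp (y 0) ≤ γ := hyA
    have hyB : γ < ∑ i, Real.exp (y i) := not_le.mp hyB
    have h0 : (y - (m + Λ γ)) 0 = y 0 - Real.log γ := by simp [Λ]
    have hexp0 : Real.exp (y 0) = γ * Real.exp ((y - (m + Λ γ)) 0) := by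
      rw [h0, Real.exp_sub, Real.exp_log hγ]
      field_simp
    have hexp : ∀ j : Fin n, Real.exp (y j.succ) =
        γ * (c j.succ * γ ^ a j.succ * Real.exp ((y - (m + Λ γ)) j.succ)) := fun j => by
      rw [hc, Real.rpow_def_of_pos hγ, ha, ← Real.exp_add, ← Real.exp_add]
      conv_rhs => rw [← Real.exp_log hγ, ← Real.exp_add, Real.exp_log hγ]
      congr 1
      simp [Λ]
      ring
    refine ⟨?_, ?_⟩
    · rw [h0, sub_nonpos]
      exact (Real.le_log_iff_exp_le hγ).mpr hyA
    · rw [Fin.sum_univ_succ, hexp0] at hyB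
      simp only [hexp, ← Finset.mul_sum, ← mul_add] at hyB
      have h1 : 1 < Real.exp ((y - (m + Λ γ)) 0) +
          ∑ j : Fin n, c j.succ * γ ^ a j.succ * Real.exp ((y - (m + Λ γ)) j.succ) :=
        (lt_mul_iff_one_lt_right hγ).mp hyB
      have h2 : ∑ j : Fin n, c j.succ * γ ^ a j.succ * Real.exp ((y - (m + Λ γ)) j.succ) ≤
          ε * ∑ j : Fin n, Real.exp ((y - (m + Λ γ)) j.succ) := by
        rw [Finset.mul_sum]
        gcongr with j
        exact hγmax _ (Fin.succ_ne_zero j)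
      linarith
  have hdiff : P1 γ - P2 γ = ∫ y in A \ B, g γ y :=
    (setIntegral_sdiff hBm (hg_int γ).integrableOn hBA).symm
  rw [hdiff, integral_eq_lintegral_of_nonneg_ae (ae_of_all _ (hg_nonneg γ))
    (hg_cont γ).aestronglyMeasurable]
  refine ENNReal.toReal_le_of_le_ofReal ?_ ?_
  · rw [mul_assoc]
    exact mul_nonneg (mul_nonneg hK hC) hε
  set H : (Fin (n + 1) → ℝ) → ENNReal :=
    D.indicator fun z => ENNReal.ofReal (K * Real.exp (-(δ / 2) * ∑ i, z i ^ 2))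
  calc ∫⁻ y in A \ B, ENNReal.ofReal (g γ y)
      = ∫⁻ y, (A \ B).indicator (fun y => ENNReal.ofReal (g γ y)) y :=
        (lintegral_indicator (hAm.diff hBm) _).symm
    _ ≤ ∫⁻ y, H (y - (m + Λ γ)) := by
        refine lintegral_mono (Set.indicator_le fun y hy => ?_)
        simp only [H, Set.indicator_of_mem (hshift y hy)]
        exact ENNReal.ofReal_le_ofReal (hg_le γ y)
    _ = ∫⁻ z, H z := lintegral_sub_right_eq_self _ _
    _ = ENNReal.ofReal K * ∫⁻ z in D,
          ENNReal.ofReal (Real.exp (-(δ / 2) * ∑ i, z i ^ 2)) := by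
        simp only [H, ENNReal.ofReal_mul hK]
        rw [lintegral_indicator hDm, lintegral_const_mul _ (by fun_prop)]
    _ ≤ ENNReal.ofReal K * ENNReal.ofReal (C * ε) := by gcongr; exact hlayer ε hε
    _ = ENNReal.ofReal (K * C * c i₀ * γ ^ a i₀) := by
        rw [← ENNReal.ofReal_mul hK]
        congr 1
        simp only [ε]
        ring
end

section
/- Proposition 1 (part 2): Under Assumption A, the correlation coefficient ρ between T(Y) and Z(Y) under the mean-shifted measure g tends to 1 as γ → 0. -/
open MeasureTheory Matrix Real Filter

/-- A positive definite quadratic form dominates a multiple of the sum of squares. -/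
lemma Matrix.PosDef.exists_mul_sum_sq_le_s16 {ι : Type*} [Fintype ι] {M : Matrix ι ι ℝ}
    (hM : M.PosDef) : ∃ c > 0, ∀ v : ι → ℝ, c * ∑ i, v i ^ 2 ≤ v ⬝ᵥ M.mulVec v := by
  have hcont : Continuous fun v : ι → ℝ => v ⬝ᵥ M.mulVec v := by fun_prop
  have hsq : Continuous fun v : ι → ℝ => ∑ i, v i ^ 2 := by fun_prop
  have hK : IsCompact {v : ι → ℝ | ∑ i, v i ^ 2 = 1} := by
    refine Metric.isCompact_of_isClosed_isBounded (isClosed_eq hsq continuous_const) ?_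
    refine (Metric.isBounded_closedBall (x := 0) (r := 1)).subset fun v hv => ?_
    rw [mem_closedBall_zero_iff, pi_norm_le_iff_of_nonneg zero_le_one]
    intro i
    rw [Real.norm_eq_abs, ← sq_le_one_iff_abs_le_one, ← Set.mem_ofPred_eq.mp hv]
    exact Finset.single_le_sum (f := fun i => v i ^ 2) (fun j _ => sq_nonneg _)
      (Finset.mem_univ i)
  have hpos : ∀ v ∈ {v : ι → ℝ | ∑ i, v i ^ 2 = 1}, 0 < v ⬝ᵥ M.mulVec v := by
    intro v hv
    have hv0 : v ≠ 0 := by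
      rintro rfl
      simp at hv
    simpa using hM.dotProduct_mulVec_pos hv0
  obtain ⟨c, hc, hcK⟩ : ∃ c > 0, ∀ v ∈ {v : ι → ℝ | ∑ i, v i ^ 2 = 1},
      c ≤ v ⬝ᵥ M.mulVec v := by
    rcases Set.eq_empty_or_nonempty {v : ι → ℝ | ∑ i, v i ^ 2 = 1} with h | h
    · exact ⟨1, one_pos, by simp [h]⟩
    · obtain ⟨v, hv, hmin⟩ := hK.exists_isMinOn h hcont.continuousOn
      exact ⟨_, hpos v hv, fun w hw => hmin hw⟩
  refine ⟨c, hc, fun v => ?_⟩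
  have h0 : 0 ≤ ∑ i, v i ^ 2 := Finset.sum_nonneg fun i _ => sq_nonneg _
  rcases h0.eq_or_lt with h | h
  · rw [← h, mul_zero]
    simpa using hM.posSemidef.dotProduct_mulVec_nonneg v
  · set r := √(∑ i, v i ^ 2) with hr
    have hr2 : r ^ 2 = ∑ i, v i ^ 2 := Real.sq_sqrt h0
    have hr0 : 0 < r := Real.sqrt_pos.2 h
    have := hcK (r⁻¹ • v) (by
      simp only [Set.mem_ofPred_eq, Pi.smul_apply, smul_eq_mul, mul_pow, ← Finset.mul_sum, ← hr2]
      field_simp)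
    rw [mulVec_smul, smul_dotProduct, dotProduct_smul, smul_eq_mul, smul_eq_mul] at this
    rw [← hr2]
    calc c * r ^ 2 ≤ (r⁻¹ * (r⁻¹ * (v ⬝ᵥ M.mulVec v))) * r ^ 2 := by gcongr
      _ = _ := by field_simp

/-- The regression coefficients of the coordinates of a random vector with covariance matrix `S`
on its coordinate `0`. -/
noncomputable def regressionVec {n : ℕ} (S : Matrix (Fin (n + 1)) (Fin (n + 1)) ℝ) :
    Fin (n + 1) → ℝ :=
  fun k => S k 0 / S 0 0

/-- The density, up to a factor, of a rescaled Gaussian vector written in the coordinates given by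
its coordinate `0` and the residuals of the regression on it. -/
noncomputable def tiltedKernel {n : ℕ} (S : Matrix (Fin (n + 1)) (Fin (n + 1)) ℝ) (κ s : ℝ)
    (z : Fin (n + 1) → ℝ) : ℝ :=
  Real.exp (-κ * z 0 - s ^ 2 * z 0 ^ 2 / (2 * S 0 0) -
    Function.update z 0 0 ⬝ᵥ S⁻¹.mulVec (Function.update z 0 0) / 2)

/-- The affine change of coordinates from the rescaled coordinate `0` and the residuals to the
original coordinates. -/
noncomputable def regressionMap {n : ℕ} (m : Fin (n + 1) → ℝ)
    (S : Matrix (Fin (n + 1)) (Fin (n + 1)) ℝ) (e s : ℝ) (z : Fin (n + 1) → ℝ) :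
    Fin (n + 1) → ℝ :=
  m + ((-(e + s * z 0)) • regressionVec S + Function.update z 0 0)

section

variable {n : ℕ} {m : Fin (n + 1) → ℝ} {S : Matrix (Fin (n + 1)) (Fin (n + 1)) ℝ}

lemma regressionVec_zero (hS : S.PosDef) : regressionVec S 0 = 1 :=
  div_self hS.diag_pos.ne'

lemma continuous_tiltedKernel (κ s : ℝ) : Continuous (tiltedKernel S κ s) := by
  unfold tiltedKernel
  fun_prop

lemma continuous_regressionMap (e s : ℝ) : Continuous (regressionMap m S e s) := by
  unfold regressionMap
  fun_prop

lemma tiltedKernel_pos (κ s : ℝ) (z : Fin (n + 1) → ℝ) : 0 < tiltedKernel S κ s z :=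
  Real.exp_pos _

lemma tiltedKernel_le (hS : S.PosDef) (κ s : ℝ) (z : Fin (n + 1) → ℝ) :
    tiltedKernel S κ s z ≤ tiltedKernel S κ 0 z := by
  have h : 0 ≤ s ^ 2 * z 0 ^ 2 / (2 * S 0 0) := by
    have := hS.diag_pos (i := 0)
    positivity
  refine Real.exp_le_exp.2 (sub_le_sub_right (sub_le_sub_left ?_ _) _)
  rwa [zero_pow two_ne_zero, zero_mul, zero_div]

lemma integrable_indicator_tiltedKernel (hS : S.PosDef) {κ : ℝ} (hκ : 0 < κ) :
    Integrable ({z : Fin (n + 1) → ℝ | 0 ≤ z 0}.indicator (tiltedKernel S κ 0)) := by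
  obtain ⟨c, hc, hQ⟩ := hS.inv.exists_mul_sum_sq_le_s16
  let h : Fin (n + 1) → ℝ → ℝ := Fin.cons ((Set.Ici 0).indicator fun t => Real.exp (-κ * t))
    fun _ t => Real.exp (-(c / 2) * t ^ 2)
  have hint : Integrable fun z : Fin (n + 1) → ℝ => ∏ i, h i (z i) := by
    refine Integrable.fintype_prod fun i => ?_
    refine Fin.cases ?_ (fun j => ?_) i
    · simp only [h, Fin.cons_zero]
      rw [integrable_indicator_iff measurableSet_Ici, integrableOn_Ici_iff_integrableOn_Ioi]
      exact exp_neg_integrableOn_Ioi 0 hκ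
    · simp only [h, Fin.cons_succ]
      exact integrable_exp_neg_mul_sq (by positivity)
  have hmeas : MeasurableSet {z : Fin (n + 1) → ℝ | 0 ≤ z 0} :=
    measurableSet_le measurable_const (measurable_pi_apply 0)
  refine hint.mono' ((continuous_tiltedKernel κ 0).measurable.indicator hmeas).aestronglyMeasurable
    (Eventually.of_forall fun z => ?_)
  rw [Fin.prod_univ_succ]
  by_cases hz : 0 ≤ z 0
  · rw [Set.indicator_of_mem (by exact hz), Real.norm_of_nonneg (tiltedKernel_pos _ _ _).le]
    simp only [h, Fin.cons_zero, Fin.cons_succ, Set.indicator_of_mem (Set.mem_Ici.2 hz),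
      ← Real.exp_sum, ← Real.exp_add]
    unfold tiltedKernel
    gcongr
    have := hQ (Function.update z 0 0)
    rw [Fin.sum_univ_succ] at this
    simp only [Function.update_self, ne_eq, Fin.succ_ne_zero, not_false_eq_true,
      Function.update_of_ne, zero_pow two_ne_zero, zero_add] at this
    rw [← Finset.mul_sum, zero_pow two_ne_zero, zero_mul, zero_div, sub_zero]
    linarith
  · rw [Set.indicator_of_notMem (by exact hz)]
    simp [h, hz]

/-- The limit of the integrals of the kernel over sets that fill up a half space. -/
lemma tendsto_integral_indicator_tiltedKernel (hS : S.PosDef) {κ : ℝ} (hκ : 0 < κ)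
    {ι : Type*} {l : Filter ι} [l.IsCountablyGenerated] {D : ι → Set (Fin (n + 1) → ℝ)} {s : ι → ℝ}
    (hs : Tendsto s l (nhds 0)) (hmeas : ∀ i, MeasurableSet (D i))
    (hsub : ∀ᶠ i in l, D i ⊆ {z | 0 ≤ z 0}) (hD : ∀ z, 0 < z 0 → ∀ᶠ i in l, z ∈ D i) :
    Tendsto (fun i => ∫ z, (D i).indicator (tiltedKernel S κ (s i)) z) l
      (nhds (∫ z, {z : Fin (n + 1) → ℝ | 0 ≤ z 0}.indicator (tiltedKernel S κ 0) z)) := by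
  refine tendsto_integral_filter_of_dominated_convergence _
    (Eventually.of_forall fun i => ((continuous_tiltedKernel κ _).measurable.indicator
      (hmeas i)).aestronglyMeasurable) ?_ (integrable_indicator_tiltedKernel hS hκ) ?_
  · filter_upwards [hsub] with i hi
    refine Eventually.of_forall fun z => ?_
    rw [Real.norm_of_nonneg (Set.indicator_nonneg (fun z _ => (tiltedKernel_pos _ _ _).le) _)]
    refine (Set.indicator_le_indicator_of_subset hi (fun z => (tiltedKernel_pos _ _ _).le) z).trans
      (Set.indicator_le_indicator (tiltedKernel_le hS _ _ _))
  · have hne : ∀ᵐ z : Fin (n + 1) → ℝ, z 0 ≠ 0 := Measure.ae_eval_ne _ 0 0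
    filter_upwards [hne] with z hz
    rcases hz.lt_or_gt with h | h
    · rw [Set.indicator_of_notMem (by simpa using h)]
      refine tendsto_const_nhds.congr' ?_
      filter_upwards [hsub] with i hi
      rw [Set.indicator_of_notMem fun hzi => h.not_ge (hi hzi)]
    · rw [Set.indicator_of_mem (by exact h.le)]
      have hcont : Continuous fun s => tiltedKernel S κ s z := by
        unfold tiltedKernel
        fun_prop
      refine ((hcont.tendsto 0).comp hs).congr' ?_
      filter_upwards [hD z h] with i hi
      rw [Set.indicator_of_mem hi]
      rfl

lemma integral_indicator_tiltedKernel_pos (hS : S.PosDef) {κ : ℝ} (hκ : 0 < κ) :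
    0 < ∫ z, {z : Fin (n + 1) → ℝ | 0 ≤ z 0}.indicator (tiltedKernel S κ 0) z := by
  rw [integral_pos_iff_support_of_nonneg
    (Set.indicator_nonneg (fun z _ => (tiltedKernel_pos _ _ _).le))
    (integrable_indicator_tiltedKernel hS hκ)]
  have hopen : IsOpen {z : Fin (n + 1) → ℝ | 0 < z 0} :=
    isOpen_lt continuous_const (continuous_apply 0)
  refine (hopen.measure_pos volume ⟨fun _ => 1, by simp⟩).trans_le (measure_mono fun z hz => ?_)
  have hz' : z ∈ {z : Fin (n + 1) → ℝ | 0 ≤ z 0} := (show 0 < z 0 from hz).le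
  rw [Function.mem_support, Set.indicator_of_mem hz']
  exact (tiltedKernel_pos _ _ _).ne'

lemma dotProduct_inv_mulVec_regressionVec (hS : S.PosDef) (τ : ℝ) {v : Fin (n + 1) → ℝ}
    (hv : v 0 = 0) :
    (τ • regressionVec S + v) ⬝ᵥ S⁻¹.mulVec (τ • regressionVec S + v) =
      τ ^ 2 / S 0 0 + v ⬝ᵥ S⁻¹.mulVec v := by
  have hdet : IsUnit S.det := (Matrix.isUnit_iff_isUnit_det S).1 hS.isUnit
  have hcol : regressionVec S = (S 0 0)⁻¹ • S.mulVec (Pi.single 0 1) := by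
    ext k
    simp [regressionVec, div_eq_inv_mul]
  have hβ : S⁻¹.mulVec (regressionVec S) = (S 0 0)⁻¹ • Pi.single 0 1 := by
    rw [hcol, mulVec_smul, mulVec_mulVec, nonsing_inv_mul _ hdet, one_mulVec]
  have hsymm : regressionVec S ⬝ᵥ S⁻¹.mulVec v = v ⬝ᵥ S⁻¹.mulVec (regressionVec S) := by
    have hT : (S⁻¹)ᵀ = S⁻¹ := by simpa using hS.inv.isHermitian.eq
    rw [dotProduct_mulVec, ← mulVec_transpose, hT, dotProduct_comm]
  simp only [mulVec_add, mulVec_smul, dotProduct_add, add_dotProduct, smul_dotProduct,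
    dotProduct_smul, hsymm, hβ]
  simp only [dotProduct_single, hv, regressionVec_zero hS, smul_eq_mul]
  ring

lemma integral_comp_regressionMap (hS : S.PosDef) {e s : ℝ} (hs : 0 < s)
    (F : (Fin (n + 1) → ℝ) → ℝ) :
    ∫ y, F y = s * ∫ z, F (regressionMap m S e s z) := by
  let M : Matrix (Fin (n + 1)) (Fin (n + 1)) ℝ := Matrix.of fun i j =>
    if j = 0 then -s * regressionVec S i else if i = j then 1 else 0
  have hdet : M.det = -s := by
    rw [Matrix.det_of_isLowerTriangular M (fun i j (hij : i < j) => by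
      have : j ≠ 0 := (Fin.zero_le i |>.trans_lt hij).ne'
      simp [M, this, hij.ne]), Fin.prod_univ_succ]
    simp [M, regressionVec_zero hS]
  have hdet0 : M.det ≠ 0 := by rw [hdet]; exact neg_ne_zero.2 hs.ne'
  have hmap : ∀ z, regressionMap m S e s z =
      Matrix.toLin' M z + (m + (-e) • regressionVec S) := by
    intro z
    ext i
    have h0 := regressionVec_zero hS
    simp only [regressionMap, Matrix.toLin'_apply, Pi.add_apply, Pi.smul_apply, smul_eq_mul,
      mulVec, dotProduct, M, Matrix.of_apply, Fin.sum_univ_succ, Fin.succ_ne_zero, if_true, if_false]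
    refine Fin.cases ?_ (fun j => ?_) i
    · simp [h0, (Fin.succ_ne_zero _).symm]
      ring
    · simp
      ring
  have hemb : MeasurableEmbedding (Matrix.toLin' M) := by
    refine (LinearMap.continuous_of_finiteDimensional _).measurableEmbedding ?_
    rw [← LinearMap.ker_eq_bot, Matrix.ker_toLin'_eq_bot_iff]
    exact fun v hv => Matrix.eq_zero_of_mulVec_eq_zero hdet0 hv
  have := hemb.integral_map (μ := volume) fun y => F (y + (m + (-e) • regressionVec S))
  rw [Real.map_matrix_volume_pi_eq_smul_volume_pi hdet0, integral_smul_measure,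
    integral_add_right_eq_self F, hdet, ENNReal.toReal_ofReal (abs_nonneg _), abs_inv, abs_neg,
    abs_of_pos hs, smul_eq_mul] at this
  simp_rw [hmap, ← this]
  field_simp

lemma mvnPdf_regressionMap (hS : S.PosDef) (e s a : ℝ) (z : Fin (n + 1) → ℝ) :
    mvnPdf (m + (-a) • regressionVec S) S (regressionMap m S e s z) =
      Real.exp (-(1 / 2) * ((e + s * z 0 - a) ^ 2 / S 0 0 +
        Function.update z 0 0 ⬝ᵥ S⁻¹.mulVec (Function.update z 0 0))) /
          √((2 * π) ^ (n + 1) * S.det) := by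
  have h : regressionMap m S e s z - (m + (-a) • regressionVec S) =
      (-(e + s * z 0 - a)) • regressionVec S + Function.update z 0 0 := by
    unfold regressionMap
    module
  rw [mvnPdf, h, dotProduct_inv_mulVec_regressionVec hS _ (by simp), neg_sq]

lemma integral_indicator_mul_mvnPdf (hS : S.PosDef) {e : ℝ} (he : 0 < e)
    (D : Set (Fin (n + 1) → ℝ)) :
    ∫ y, D.indicator (fun _ => (1 : ℝ)) y * mvnPdf m S y =
      e⁻¹ / √((2 * π) ^ (n + 1) * S.det) * Real.exp (-(e ^ 2 / (2 * S 0 0))) *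
        ∫ z, (regressionMap m S e e⁻¹ ⁻¹' D).indicator (tiltedKernel S (S 0 0)⁻¹ e⁻¹) z := by
  have h00 := (hS.diag_pos (i := 0)).ne'
  rw [integral_comp_regressionMap (m := m) (e := e) hS (inv_pos.2 he), ← integral_const_mul,
    ← integral_const_mul]
  congr 1 with z
  by_cases hz : regressionMap m S e e⁻¹ z ∈ D
  · rw [Set.indicator_of_mem hz, Set.indicator_of_mem (by exact hz)]
    have h := mvnPdf_regressionMap (m := m) hS e e⁻¹ 0 z
    rw [neg_zero, zero_smul, add_zero] at h
    have hexp : ∀ q : ℝ, Real.exp (-(1 / 2) * ((e + e⁻¹ * z 0 - 0) ^ 2 / S 0 0 + q)) =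
        Real.exp (-(e ^ 2 / (2 * S 0 0))) *
          Real.exp (-(S 0 0)⁻¹ * z 0 - e⁻¹ ^ 2 * z 0 ^ 2 / (2 * S 0 0) - q / 2) := by
      intro q
      rw [← Real.exp_add]
      congr 1
      field_simp
      ring
    rw [h, hexp, tiltedKernel]
    ring
  · simp [Set.indicator_of_notMem hz, Set.indicator_of_notMem (show z ∉ _ ⁻¹' D from hz)]

lemma integral_indicator_mul_sq_div_mvnPdf (hS : S.PosDef) {e : ℝ} (he : 0 < e)
    (D : Set (Fin (n + 1) → ℝ)) :
    ∫ y, D.indicator (fun _ => (1 : ℝ)) y *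
        (mvnPdf m S y ^ 2 / mvnPdf (m + (-e) • regressionVec S) S y) =
      e⁻¹ / √((2 * π) ^ (n + 1) * S.det) * Real.exp (-(e ^ 2 / (2 * S 0 0))) ^ 2 *
        ∫ z, (regressionMap m S e e⁻¹ ⁻¹' D).indicator
          (tiltedKernel S (2 * (S 0 0)⁻¹) e⁻¹) z := by
  have h00 := (hS.diag_pos (i := 0)).ne'
  have hc : √((2 * π) ^ (n + 1) * S.det) ≠ 0 :=
    (Real.sqrt_pos.2 (mul_pos (by positivity) hS.det_pos)).ne'
  rw [integral_comp_regressionMap (m := m) (e := e) hS (inv_pos.2 he), ← integral_const_mul,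
    ← integral_const_mul]
  congr 1 with z
  by_cases hz : regressionMap m S e e⁻¹ z ∈ D
  · rw [Set.indicator_of_mem hz, Set.indicator_of_mem (by exact hz)]
    have h := mvnPdf_regressionMap (m := m) hS e e⁻¹ 0 z
    rw [neg_zero, zero_smul, add_zero] at h
    have hexp : ∀ q : ℝ, Real.exp (-(1 / 2) * ((e + e⁻¹ * z 0 - 0) ^ 2 / S 0 0 + q)) ^ 2 =
        Real.exp (-(e ^ 2 / (2 * S 0 0))) ^ 2 *
          Real.exp (-(2 * (S 0 0)⁻¹) * z 0 - e⁻¹ ^ 2 * z 0 ^ 2 / (2 * S 0 0) - q / 2) *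
            Real.exp (-(1 / 2) * ((e + e⁻¹ * z 0 - e) ^ 2 / S 0 0 + q)) := by
      intro q
      rw [← Real.exp_nat_mul, ← Real.exp_nat_mul, ← Real.exp_add, ← Real.exp_add]
      congr 1
      field_simp
      push_cast
      ring
    rw [h, mvnPdf_regressionMap hS, div_pow, hexp, tiltedKernel]
    field_simp
  · simp [Set.indicator_of_notMem hz, Set.indicator_of_notMem (show z ∉ _ ⁻¹' D from hz)]

lemma exp_regressionMap_zero_le_iff (hS : S.PosDef) {e : ℝ} (he : 0 < e)
    (z : Fin (n + 1) → ℝ) :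
    Real.exp (regressionMap m S e e⁻¹ z 0) ≤ Real.exp (m 0 - e) ↔ 0 ≤ z 0 := by
  have h : regressionMap m S e e⁻¹ z 0 = m 0 - e - e⁻¹ * z 0 := by
    simp [regressionMap, regressionVec_zero hS]
    ring
  rw [h, Real.exp_le_exp, sub_le_self_iff, mul_nonneg_iff_of_pos_left (inv_pos.2 he)]

lemma eventually_sum_exp_regressionMap_le (hS : S.PosDef)
    (hβ : ∀ j : Fin n, 1 < regressionVec S j.succ) {z : Fin (n + 1) → ℝ} (hz : 0 < z 0) :
    ∀ᶠ e in atTop, ∑ i, Real.exp (regressionMap m S e e⁻¹ z i) ≤ Real.exp (m 0 - e) := by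
  have hlim : Tendsto (fun e : ℝ => ∑ j : Fin n, Real.exp (m j.succ - m 0 + z j.succ) *
      ((e + z 0) * Real.exp (-(regressionVec S j.succ - 1) * e))) atTop (nhds 0) := by
    rw [← Finset.sum_const_zero (M := ℝ) (s := (Finset.univ : Finset (Fin n)))]
    refine tendsto_finsetSum _ fun j _ => ?_
    rw [← mul_zero (Real.exp (m j.succ - m 0 + z j.succ))]
    refine Tendsto.const_mul _ ?_
    have hb : 0 < regressionVec S j.succ - 1 := sub_pos.2 (hβ j)
    have h0 := tendsto_rpow_mul_exp_neg_mul_atTop_nhds_zero 0 _ hb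
    have h1 := tendsto_rpow_mul_exp_neg_mul_atTop_nhds_zero 1 _ hb
    simp only [Real.rpow_zero, Real.rpow_one, one_mul] at h0 h1
    simpa [add_mul] using h1.add (h0.const_mul (z 0))
  filter_upwards [hlim.eventually_le_const hz, eventually_gt_atTop 0] with e hle he
  have hez : 0 < e + z 0 := by positivity
  have h0 : Real.exp (regressionMap m S e e⁻¹ z 0) ≤ Real.exp (m 0 - e) * (e / (e + z 0)) := by
    have h : regressionMap m S e e⁻¹ z 0 = m 0 - e + -(e⁻¹ * z 0) := by
      simp [regressionMap, regressionVec_zero hS]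
      ring
    rw [h, Real.exp_add, Real.exp_neg]
    gcongr
    rw [inv_le_comm₀ (Real.exp_pos _) (by positivity), inv_div]
    refine le_trans (le_of_eq ?_) (Real.add_one_le_exp _)
    field_simp
    ring
  have hj : ∀ j : Fin n, Real.exp (regressionMap m S e e⁻¹ z j.succ) ≤ Real.exp (m 0 - e) *
      (Real.exp (m j.succ - m 0 + z j.succ) * ((e + z 0) *
        Real.exp (-(regressionVec S j.succ - 1) * e)) / (e + z 0)) := by
    intro j
    have h : Real.exp (m 0 - e) * (Real.exp (m j.succ - m 0 + z j.succ) * ((e + z 0) *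
        Real.exp (-(regressionVec S j.succ - 1) * e)) / (e + z 0)) =
        Real.exp (m 0 - e + (m j.succ - m 0 + z j.succ +
          -(regressionVec S j.succ - 1) * e)) := by
      rw [Real.exp_add (m 0 - e), Real.exp_add (m j.succ - m 0 + z j.succ)]
      field_simp
    rw [h, Real.exp_le_exp]
    have : 0 ≤ e⁻¹ * z 0 * regressionVec S j.succ :=
      mul_nonneg (by positivity) (zero_le_one.trans (hβ j).le)
    simp [regressionMap]
    linarith
  rw [Fin.sum_univ_succ]
  refine (add_le_add h0 (Finset.sum_le_sum fun j _ => hj j)).trans ?_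
  rw [← Finset.mul_sum, ← Finset.sum_div, ← mul_add, ← add_div]
  refine mul_le_of_le_one_right (Real.exp_pos _).le ((div_le_one hez).2 ?_)
  linarith

end

/-- If all second moments, on a common scale `k`, have the same positive limit and the means are
negligible on that scale, then the correlation coefficient tends to `1`. -/
lemma tendsto_correlation_one {ι : Type*} {l : Filter ι} {k r a b p q : ι → ℝ} {J J' : ℝ}
    (hJ : 0 < J) (hk : ∀ᶠ i in l, 0 < k i) (hr : Tendsto r l (nhds 0))
    (ha : Tendsto a l (nhds J)) (hb : Tendsto b l (nhds J))
    (hq : Tendsto q l (nhds J')) (hp : Tendsto p l (nhds J')) :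
    Tendsto (fun i => (k i * a i - k i * r i * (q i * p i)) /
      √((k i * a i - k i * r i * q i ^ 2) * (k i * b i - k i * r i * p i ^ 2))) l (nhds 1) := by
  have hcov : Tendsto (fun i => a i - r i * (q i * p i)) l (nhds J) := by
    simpa using ha.sub (hr.mul (hq.mul hp))
  have hvT : Tendsto (fun i => a i - r i * q i ^ 2) l (nhds J) := by
    simpa using ha.sub (hr.mul (hq.pow 2))
  have hvZ : Tendsto (fun i => b i - r i * p i ^ 2) l (nhds J) := by
    simpa using hb.sub (hr.mul (hp.pow 2))
  have hlim := hcov.div (hvT.mul hvZ).sqrt (by positivity)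
  rw [Real.sqrt_mul_self hJ.le, div_self hJ.ne'] at hlim
  refine hlim.congr' ?_
  filter_upwards [hk] with i hi
  have h : (k i * a i - k i * r i * q i ^ 2) * (k i * b i - k i * r i * p i ^ 2) =
      k i ^ 2 * ((a i - r i * q i ^ 2) * (b i - r i * p i ^ 2)) := by ring
  rw [h, Real.sqrt_mul (sq_nonneg _), Real.sqrt_sq hi.le,
    show k i * a i - k i * r i * (q i * p i) = k i * (a i - r i * (q i * p i)) by ring]
  exact (mul_div_mul_left _ _ hi.ne').symm

theorem stmt16 {n : ℕ} (m : Fin (n + 1) → ℝ) (S : Matrix (Fin (n + 1)) (Fin (n + 1)) ℝ)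
    (hS : S.PosDef)
    (hA : ∀ j : Fin (n + 1), j ≠ 0 →
      Real.sqrt (S 0 0) < S 0 j / Real.sqrt (S 0 0 * S j j) * Real.sqrt (S j j)) :
    let Λ : ℝ → Fin (n + 1) → ℝ := fun γ k =>
      if k = 0 then Real.log γ - m 0 else S k 0 / S 0 0 * (Real.log γ - m 0)
    let g : ℝ → (Fin (n + 1) → ℝ) → ℝ := fun γ y => mvnPdf (m + Λ γ) S y
    let L : ℝ → (Fin (n + 1) → ℝ) → ℝ := fun γ y => mvnPdf m S y / g γ y
    let T : ℝ → (Fin (n + 1) → ℝ) → ℝ := fun γ y =>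
      Set.indicator {y : Fin (n + 1) → ℝ | ∑ i, Real.exp (y i) ≤ γ} (fun _ => (1 : ℝ)) y *
        L γ y
    let Z : ℝ → (Fin (n + 1) → ℝ) → ℝ := fun γ y =>
      Set.indicator {y : Fin (n + 1) → ℝ | Real.exp (y 0) ≤ γ} (fun _ => (1 : ℝ)) y * L γ y
    let α : ℝ → ℝ := fun γ => ∫ y : Fin (n + 1) → ℝ, T γ y * g γ y
    let P : ℝ → ℝ := fun γ => ∫ y : Fin (n + 1) → ℝ, Z γ y * g γ y
    let varT : ℝ → ℝ := fun γ => (∫ y : Fin (n + 1) → ℝ, (T γ y) ^ 2 * g γ y) - α γ ^ 2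
    let varZ : ℝ → ℝ := fun γ => (∫ y : Fin (n + 1) → ℝ, (Z γ y) ^ 2 * g γ y) - P γ ^ 2
    let cov : ℝ → ℝ := fun γ =>
      (∫ y : Fin (n + 1) → ℝ, T γ y * Z γ y * g γ y) - α γ * P γ
    Filter.Tendsto (fun γ : ℝ => cov γ / Real.sqrt (varT γ * varZ γ))
      (nhdsWithin 0 (Set.Ioi 0)) (nhds 1) := by
  intro Λ g L T Z α P varT varZ cov
  have h00 : 0 < S 0 0 := hS.diag_pos
  have hsymm : ∀ j, S 0 j = S j 0 := fun j => by simpa using (hS.isHermitian.apply 0 j).symm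
  have hβ : ∀ j : Fin n, 1 < regressionVec S j.succ := by
    intro j
    have hj : 0 < S j.succ j.succ := hS.diag_pos
    have h := hA j.succ (Fin.succ_ne_zero j)
    rw [Real.sqrt_mul h00.le, ← div_div, div_mul_cancel₀ _ (Real.sqrt_pos.2 hj).ne',
      lt_div_iff₀ (Real.sqrt_pos.2 h00), Real.mul_self_sqrt h00.le, hsymm j.succ] at h
    exact (one_lt_div h00).2 h
  have hdet : 0 < √((2 * π) ^ (n + 1) * S.det) :=
    Real.sqrt_pos.2 (mul_pos (by positivity) hS.det_pos)
  have hpdf : ∀ (a : Fin (n + 1) → ℝ) y, 0 < mvnPdf a S y := fun a y =>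
    div_pos (Real.exp_pos _) hdet
  have hlog : Tendsto (fun γ : ℝ => m 0 - Real.log γ) (nhdsWithin 0 (Set.Ioi 0)) atTop :=
    tendsto_atTop_add_const_left _ _ (tendsto_neg_atBot_atTop.comp Real.tendsto_log_nhdsGT_zero)
  suffices h : Tendsto (fun e : ℝ => cov (Real.exp (m 0 - e)) /
      √(varT (Real.exp (m 0 - e)) * varZ (Real.exp (m 0 - e)))) atTop (nhds 1) by
    refine (h.comp hlog).congr' ?_
    filter_upwards [self_mem_nhdsWithin] with γ hγ
    simp only [Function.comp_apply, sub_sub_cancel, Real.exp_log hγ]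
  have hΛ : ∀ e, Λ (Real.exp (m 0 - e)) = (-e) • regressionVec S := by
    intro e
    ext k
    simp only [Λ, Real.log_exp, Pi.smul_apply, smul_eq_mul, regressionVec]
    split_ifs with hk
    · rw [hk, div_self h00.ne']
      ring
    · ring
  let A : ℝ → Set (Fin (n + 1) → ℝ) := fun e => {y | ∑ i, Real.exp (y i) ≤ Real.exp (m 0 - e)}
  let B : ℝ → Set (Fin (n + 1) → ℝ) := fun e => {y | Real.exp (y 0) ≤ Real.exp (m 0 - e)}
  have hAB : ∀ e, A e ⊆ B e := fun e y hy =>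
    (Finset.single_le_sum (f := fun i => Real.exp (y i)) (fun i _ => (Real.exp_pos _).le)
      (Finset.mem_univ 0)).trans hy
  have hAm : ∀ e, MeasurableSet (regressionMap m S e e⁻¹ ⁻¹' A e) := fun e =>
    (continuous_regressionMap e e⁻¹).measurable
      (measurableSet_le (by fun_prop) measurable_const)
  have hBm : ∀ e, MeasurableSet (regressionMap m S e e⁻¹ ⁻¹' B e) := fun e =>
    (continuous_regressionMap e e⁻¹).measurable
      (measurableSet_le (by fun_prop) measurable_const)
  have hBsub : ∀ᶠ e in atTop, regressionMap m S e e⁻¹ ⁻¹' B e ⊆ {z | 0 ≤ z 0} := by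
    filter_upwards [eventually_gt_atTop 0] with e he z hz
    exact (exp_regressionMap_zero_le_iff hS he z).1 hz
  have hAsub : ∀ᶠ e in atTop, regressionMap m S e e⁻¹ ⁻¹' A e ⊆ {z | 0 ≤ z 0} := by
    filter_upwards [hBsub] with e he
    exact (Set.preimage_mono (hAB e)).trans he
  have hAz : ∀ z : Fin (n + 1) → ℝ, 0 < z 0 →
      ∀ᶠ e in atTop, z ∈ regressionMap m S e e⁻¹ ⁻¹' A e := fun z hz =>
    eventually_sum_exp_regressionMap_le hS hβ hz
  have hBz : ∀ z : Fin (n + 1) → ℝ, 0 < z 0 →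
      ∀ᶠ e in atTop, z ∈ regressionMap m S e e⁻¹ ⁻¹' B e := fun z hz =>
    (hAz z hz).mono fun e he => hAB e he
  have hs : Tendsto (fun e : ℝ => e⁻¹) atTop (nhds 0) := tendsto_inv_atTop_zero
  have hκ : 0 < (S 0 0)⁻¹ := inv_pos.2 h00
  have hκ2 : 0 < 2 * (S 0 0)⁻¹ := by positivity
  have hα : ∀ e, α (Real.exp (m 0 - e)) =
      ∫ y, (A e).indicator (fun _ => (1 : ℝ)) y * mvnPdf m S y := by
    intro e
    refine integral_congr_ae (Eventually.of_forall fun y => ?_)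
    have := (hpdf (m + Λ (Real.exp (m 0 - e))) y).ne'
    simp only [T, L, g, A]
    field_simp
  have hP : ∀ e, P (Real.exp (m 0 - e)) =
      ∫ y, (B e).indicator (fun _ => (1 : ℝ)) y * mvnPdf m S y := by
    intro e
    refine integral_congr_ae (Eventually.of_forall fun y => ?_)
    have := (hpdf (m + Λ (Real.exp (m 0 - e))) y).ne'
    simp only [Z, L, g, B]
    field_simp
  have hTT : ∀ e, ∫ y, T (Real.exp (m 0 - e)) y ^ 2 * g (Real.exp (m 0 - e)) y =
      ∫ y, (A e).indicator (fun _ => (1 : ℝ)) y *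
        (mvnPdf m S y ^ 2 / mvnPdf (m + (-e) • regressionVec S) S y) := by
    intro e
    refine integral_congr_ae (Eventually.of_forall fun y => ?_)
    have := (hpdf (m + (-e) • regressionVec S) y).ne'
    simp only [T, L, g, hΛ]
    by_cases hy : y ∈ A e
    · rw [Set.indicator_of_mem hy]
      field_simp
    · rw [Set.indicator_of_notMem hy]
      ring
  have hZZ : ∀ e, ∫ y, Z (Real.exp (m 0 - e)) y ^ 2 * g (Real.exp (m 0 - e)) y =
      ∫ y, (B e).indicator (fun _ => (1 : ℝ)) y *
        (mvnPdf m S y ^ 2 / mvnPdf (m + (-e) • regressionVec S) S y) := by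
    intro e
    refine integral_congr_ae (Eventually.of_forall fun y => ?_)
    have := (hpdf (m + (-e) • regressionVec S) y).ne'
    simp only [Z, L, g, hΛ]
    by_cases hy : y ∈ B e
    · rw [Set.indicator_of_mem hy]
      field_simp
    · rw [Set.indicator_of_notMem hy]
      ring
  have hTZ : ∀ e, ∫ y, T (Real.exp (m 0 - e)) y * Z (Real.exp (m 0 - e)) y *
      g (Real.exp (m 0 - e)) y = ∫ y, T (Real.exp (m 0 - e)) y ^ 2 * g (Real.exp (m 0 - e)) y := by
    intro e
    refine integral_congr_ae (Eventually.of_forall fun y => ?_)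
    simp only [T, Z]
    by_cases hy : y ∈ A e
    · rw [Set.indicator_of_mem (by exact hy), Set.indicator_of_mem (by exact hAB e hy)]
      ring
    · rw [Set.indicator_of_notMem (by exact hy)]
      ring
  have hr : Tendsto (fun e : ℝ => e⁻¹ / √((2 * π) ^ (n + 1) * S.det)) atTop (nhds 0) := by
    simpa using hs.div_const (√((2 * π) ^ (n + 1) * S.det))
  refine (tendsto_correlation_one
    (k := fun e => e⁻¹ / √((2 * π) ^ (n + 1) * S.det) * Real.exp (-(e ^ 2 / (2 * S 0 0))) ^ 2)
    (integral_indicator_tiltedKernel_pos hS hκ2) ?_ hr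
    (tendsto_integral_indicator_tiltedKernel hS hκ2 hs hAm hAsub hAz)
    (tendsto_integral_indicator_tiltedKernel hS hκ2 hs hBm hBsub hBz)
    (tendsto_integral_indicator_tiltedKernel hS hκ hs hAm hAsub hAz)
    (tendsto_integral_indicator_tiltedKernel hS hκ hs hBm hBsub hBz)).congr' ?_
  · filter_upwards [eventually_gt_atTop 0] with e he
    positivity
  · filter_upwards [eventually_gt_atTop 0] with e he
    simp only [cov, varT, varZ, hTZ, hTT, hZZ, hα, hP, integral_indicator_mul_mvnPdf hS he,
      integral_indicator_mul_sq_div_mvnPdf hS he]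
    congr 1
    · ring
    · congr 1
      ring
end
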